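/- Let δ ∈ (0,1) and suppose that (1/|T_L|) ∑_{z ∈ T_L} ⟨φ_o^1 φ_z^1⟩_{L,N,β} ≥ 1/N − δ. Then for every y ∈ B_{L/8} ∩ H_L one has ⟨φ_o^1 φ_y^1⟩_{L,N,β} ≥ 1/N − 2^{2d} δ, and for every y ∈ B_{L/8} ∖ H_L one has ⟨φ_o^1 φ_y^1⟩_{L,N,β} ≥ (1/N − 2^{2d} δ) · (β e^{−2dβ} / N)^{d−2}. -/

import Mathlib

open MeasureTheory Metric
open scoped RealInnerProductSpace BigOperators

/-- Vertices of the torus `(ℤ/Lℤ)^d`. -/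
abbrev TorusPt (d L : ℕ) := Fin d → ZMod L

/-- Nearest-neighbour adjacency on the torus: `x` and `y` differ by `±1 (mod L)`
in exactly one coordinate. -/
def torusAdj {d L : ℕ} (x y : TorusPt d L) : Prop :=
  ∃ j : Fin d, y = Function.update x j (x j + 1) ∨ y = Function.update x j (x j - 1)

instance {d L : ℕ} (x y : TorusPt d L) : Decidable (torusAdj x y) := by
  unfold torusAdj; infer_instance

/-- The unit sphere `S^{N-1} ⊂ ℝ^N`. -/
abbrev SpinSphere (N : ℕ) := sphere (0 : EuclideanSpace ℝ (Fin N)) 1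

/-- A spin configuration on the torus. -/
abbrev SpinCfg (d L N : ℕ) := TorusPt d L → SpinSphere N

/-- The uniform probability measure on the unit sphere `S^{N-1}`. -/
noncomputable def sphereUniform (N : ℕ) : Measure (SpinSphere N) :=
  ((volume : Measure (EuclideanSpace ℝ (Fin N))).toSphere Set.univ)⁻¹ •
    (volume : Measure (EuclideanSpace ℝ (Fin N))).toSphere

/-- The product over vertices of the uniform probability measures on the sphere. -/
noncomputable def spinMeasure (d L N : ℕ) [NeZero L] : Measure (SpinCfg d L N) :=
  Measure.pi fun _ : TorusPt d L => sphereUniform N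

/-- The Hamiltonian `H(φ) = -∑_{{x,y} edge} φ_x · φ_y`; every unordered
nearest-neighbour edge appears exactly twice in the double sum below. -/
noncomputable def hamiltonian {d L N : ℕ} [NeZero L] (φ : SpinCfg d L N) : ℝ :=
  -(1 / 2) * ∑ x : TorusPt d L, ∑ y : TorusPt d L,
    if torusAdj x y then
      ⟪(φ x : EuclideanSpace ℝ (Fin N)), (φ y : EuclideanSpace ℝ (Fin N))⟫
    else 0

/-- The Gibbs expectation `⟨f⟩_{L,N,β}`. -/
noncomputable def gibbsExp (d L N : ℕ) [NeZero L] (β : ℝ) (f : SpinCfg d L N → ℝ) : ℝ :=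
  (∫ φ, Real.exp (-β * hamiltonian φ) ∂(spinMeasure d L N))⁻¹ *
    ∫ φ, f φ * Real.exp (-β * hamiltonian φ) ∂(spinMeasure d L N)

/-- The spin-spin correlation `⟨φ_x ⬝ φ_y⟩_{L,N,β}`. -/
noncomputable def corrDot (d L N : ℕ) [NeZero L] (β : ℝ) (x y : TorusPt d L) : ℝ :=
  gibbsExp d L N β fun φ =>
    ⟪(φ x : EuclideanSpace ℝ (Fin N)), (φ y : EuclideanSpace ℝ (Fin N))⟫

/-- The correlation `⟨φ_x^1 φ_y^1⟩_{L,N,β}` of first components. -/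
noncomputable def corrOne (d L N : ℕ) [NeZero L] [NeZero N] (β : ℝ) (x y : TorusPt d L) : ℝ :=
  gibbsExp d L N β fun φ =>
    (φ x : EuclideanSpace ℝ (Fin N)) 0 * (φ y : EuclideanSpace ℝ (Fin N)) 0

/-- The origin of the torus. -/
def torusOrigin (d L : ℕ) : TorusPt d L := fun _ => 0

/-- The point `n • e_i` on the `i`-th cartesian axis. -/
def axisPt (d L : ℕ) (i : Fin d) (n : ℕ) : TorusPt d L :=
  fun k => if k = i then (n : ZMod L) else 0

/-- The sup torus norm `‖z‖_∞ = max_i min(z_i, L - z_i)`. -/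
def tnormInf {d L : ℕ} (z : TorusPt d L) : ℕ :=
  Finset.univ.sup fun i : Fin d => min (z i).val (L - (z i).val)

/-- Reflection of torus sites through the plane of sites `{x : x_i = m}`:
`Θ(x)_i = 2m - x_i (mod L)` and the other coordinates are unchanged. -/
def reflSite {d L : ℕ} (i : Fin d) (m : ℕ) (x : TorusPt d L) : TorusPt d L :=
  Function.update x i (2 * (m : ZMod L) - x i)

/-- Membership in the half-torus `T_L^+ = {x : x_i - m (mod L) ∈ {0,…,L/2}}`. -/
def inPlusSite {d L : ℕ} (i : Fin d) (m : ℕ) (x : TorusPt d L) : Prop :=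
  (x i - (m : ZMod L)).val ≤ L / 2

/-- Membership in the other half-torus `T_L^- = Θ(T_L^+)`. -/
def inMinusSite {d L : ℕ} (i : Fin d) (m : ℕ) (x : TorusPt d L) : Prop :=
  inPlusSite i m (reflSite i m x)

/-- Membership in the fixed-point set `T_L^R = {x : x_i = m or x_i = m + L/2 (mod L)}`. -/
def inFixedSite {d L : ℕ} (i : Fin d) (m : ℕ) (x : TorusPt d L) : Prop :=
  (x i - (m : ZMod L)).val = 0 ∨ (x i - (m : ZMod L)).val = L / 2

instance {d L : ℕ} (i : Fin d) (m : ℕ) : DecidablePred (inPlusSite (d := d) (L := L) i m) :=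
  fun x => by unfold inPlusSite; infer_instance

instance {d L : ℕ} (i : Fin d) (m : ℕ) : DecidablePred (inMinusSite (d := d) (L := L) i m) :=
  fun x => by unfold inMinusSite inPlusSite; infer_instance

instance {d L : ℕ} (i : Fin d) (m : ℕ) : DecidablePred (inFixedSite (d := d) (L := L) i m) :=
  fun x => by unfold inFixedSite; infer_instance

/-- Reflection through sites acting on spin configurations: `(Θφ)_x = φ_{Θ(x)}`. -/
def reflSiteCfg {d L N : ℕ} (i : Fin d) (m : ℕ) (φ : SpinCfg d L N) : SpinCfg d L N :=
  fun x => φ (reflSite i m x)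

/-- The set `H_L` of vertices with all coordinates nonzero, together with the
nonzero points of the cartesian axes. -/
def inHL {d L : ℕ} (x : TorusPt d L) : Prop :=
  (∀ j, x j ≠ 0) ∨ ∃ i, x i ≠ 0 ∧ ∀ j, j ≠ i → x j = 0

/-- `ẑ_i = min(z_i, L - z_i)`, the torus distance of the `i`-th coordinate from `0`. -/
def hatCoord {d L : ℕ} (z : TorusPt d L) (i : Fin d) : ℕ :=
  min (z i).val (L - (z i).val)

/-- The box `Q_z = {x : ∀ i, x_i ≤ ẑ_i or x_i > L - ẑ_i}` with corner `z`. -/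
def inBoxQ {d L : ℕ} (z x : TorusPt d L) : Prop :=
  ∀ i, (x i).val ≤ hatCoord z i ∨ L - hatCoord z i < (x i).val

/-!
Let `M` be the average of `φ_z^1` over the torus. Translation invariance gives
`⟨φ_x^1 M⟩ = ⟨M²⟩ = m` for every site `x`, where `m` is the Cesàro mean of the correlations from
the origin. Hence `0 ≤ ⟨(φ_o^1 + φ_y^1 - 2M)²⟩ = 2/N + 2⟨φ_o^1 φ_y^1⟩ - 4m`, that is
`⟨φ_o^1 φ_y^1⟩ ≥ 2m - 1/N ≥ 1/N - 2δ`, for *every* site `y`. Griffiths' inequality, applied to the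
Ising model of the signs of the first components, gives `⟨φ_o^1 φ_y^1⟩ ≥ 0`, and since
`β e^{-2dβ} / N ∈ [0, 1]` these two bounds imply both claims.
-/

open Real
open scoped Matrix Pointwise

/-! ### Linear isometries acting on unit spheres -/

section UnitSphere

variable {E F : Type*} [NormedAddCommGroup E] [NormedSpace ℝ E]
  [NormedAddCommGroup F] [NormedSpace ℝ F]

/-- The restriction of a linear isometry to the unit spheres. -/
def unitSphereMap (e : E ≃ₗᵢ[ℝ] F) (v : sphere (0 : E) 1) : sphere (0 : F) 1 :=
  ⟨e v, by simp⟩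

@[simp]
lemma coe_unitSphereMap (e : E ≃ₗᵢ[ℝ] F) (v : sphere (0 : E) 1) :
    (unitSphereMap e v : F) = e v := rfl

lemma continuous_unitSphereMap (e : E ≃ₗᵢ[ℝ] F) : Continuous (unitSphereMap e) :=
  (e.continuous.comp continuous_subtype_val).subtype_mk _

lemma image_coe_preimage_unitSphereMap (e : E ≃ₗᵢ[ℝ] F) (s : Set (sphere (0 : F) 1)) :
    ((↑) : sphere (0 : E) 1 → E) '' (unitSphereMap e ⁻¹' s) = e.symm '' ((↑) '' s) := by
  ext v
  constructor
  · rintro ⟨u, hu, rfl⟩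
    exact ⟨e u, ⟨unitSphereMap e u, hu, rfl⟩, e.symm_apply_apply u⟩
  · rintro ⟨_, ⟨u, hu, rfl⟩, rfl⟩
    have hinv : unitSphereMap e (unitSphereMap e.symm u) = u := Subtype.ext (by simp)
    exact ⟨unitSphereMap e.symm u, by rwa [Set.mem_preimage, hinv], rfl⟩

lemma image_smul_set_of_isometryEquiv (e : E ≃ₗᵢ[ℝ] F) (I : Set ℝ) (s : Set E) :
    e '' (I • s) = I • e '' s :=
  Set.image_image2_distrib_right fun r v => e.map_smul r v

lemma measurePreserving_unitSphereMap_toSphere [MeasurableSpace E] [BorelSpace E]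
    [MeasurableSpace F] [BorelSpace F] {μ : Measure E} {ν : Measure F} (e : E ≃ₗᵢ[ℝ] F)
    (he : MeasurePreserving e μ ν) :
    MeasurePreserving (unitSphereMap e) μ.toSphere ν.toSphere := by
  have hmeas := (continuous_unitSphereMap e).measurable
  refine ⟨hmeas, Measure.ext fun s hs => ?_⟩
  rw [Measure.map_apply hmeas hs, Measure.toSphere_apply' _ hs,
    Measure.toSphere_apply' _ (hmeas hs), image_coe_preimage_unitSphereMap,
    ← image_smul_set_of_isometryEquiv, e.symm.image_eq_preimage_symm,
    e.toLinearEquiv.finrank_eq]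
  exact congrArg _ (he.measure_preimage_equiv (f := e.toHomeomorph.toMeasurableEquiv) _)

variable {N : ℕ}

lemma measurePreserving_unitSphereMap_sphereUniform
    (e : EuclideanSpace ℝ (Fin N) ≃ₗᵢ[ℝ] EuclideanSpace ℝ (Fin N)) :
    MeasurePreserving (unitSphereMap e) (sphereUniform N) (sphereUniform N) :=
  (measurePreserving_unitSphereMap_toSphere e e.measurePreserving).smul_measure _

instance [NeZero N] : IsProbabilityMeasure (sphereUniform N) where
  measure_univ := by
    rw [sphereUniform, Measure.smul_apply, smul_eq_mul]
    exact ENNReal.inv_mul_cancel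
      (Measure.measure_univ_ne_zero.2 (Measure.toSphere_ne_zero _)) (measure_ne_top _ _)

end UnitSphere

section CoordSign

variable {ι : Type*} [Fintype ι] [DecidableEq ι]

/-- The isometry multiplying the `i`-th coordinate by the sign `u`. -/
noncomputable def coordSign (i : ι) (u : ℤˣ) :
    EuclideanSpace ℝ ι ≃ₗᵢ[ℝ] EuclideanSpace ℝ ι :=
  LinearIsometryEquiv.piLpCongrRight 2 fun j =>
    if j = i ∧ u = -1 then LinearIsometryEquiv.neg ℝ else LinearIsometryEquiv.refl ℝ ℝ

lemma coordSign_apply_self (i : ι) (u : ℤˣ) (v : EuclideanSpace ℝ ι) :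
    coordSign i u v i = u * v i := by
  rcases Int.units_eq_one_or u with rfl | rfl <;> simp [coordSign]

lemma coordSign_apply_of_ne {i j : ι} (hij : j ≠ i) (u : ℤˣ)
    (v : EuclideanSpace ℝ ι) : coordSign i u v j = v j := by
  simp [coordSign, hij]

lemma inner_coordSign (i : ι) (s t : ℤˣ) (v w : EuclideanSpace ℝ ι) :
    ⟪coordSign i s v, coordSign i t w⟫ = (⟪v, w⟫ - v i * w i) + (s * v i) * (t * w i) := by
  have hrest : ∑ j ∈ Finset.univ.erase i, ⟪coordSign i s v j, coordSign i t w j⟫ =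
      ∑ j ∈ Finset.univ.erase i, ⟪v j, w j⟫ :=
    Finset.sum_congr rfl fun j hj => by
      simp only [coordSign_apply_of_ne (Finset.ne_of_mem_erase hj)]
  rw [PiLp.inner_apply, PiLp.inner_apply, ← Finset.add_sum_erase _ _ (Finset.mem_univ i), hrest,
    ← Finset.add_sum_erase _ (fun j => ⟪v j, w j⟫) (Finset.mem_univ i)]
  simp only [coordSign_apply_self, RCLike.inner_apply, conj_trivial]
  ring

end CoordSign

/-! ### Exponentially tilted measures and averaging -/

section Tilted

variable {α β : Type*} [MeasurableSpace α] [MeasurableSpace β] {μ : Measure α} {ν : Measure β}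

lemma integral_tilted_eq_inv_mul_integral (f g : α → ℝ) :
    ∫ a, g a ∂(μ.tilted f) = (∫ a, exp (f a) ∂μ)⁻¹ * ∫ a, g a * exp (f a) ∂μ := by
  rw [integral_tilted, ← integral_const_mul]
  congr with a
  rw [smul_eq_mul]
  ring

lemma measurePreserving_tilted {T : α → β} (hT : MeasurePreserving T μ ν) {f : β → ℝ}
    (hf : Measurable f) : MeasurePreserving T (μ.tilted (f ∘ T)) (ν.tilted f) := by
  refine ⟨hT.measurable, Measure.ext fun s hs => ?_⟩
  have hZ : ∫ b, exp (f b) ∂ν = ∫ a, exp (f (T a)) ∂μ := by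
    rw [← hT.map_eq, integral_map hT.aemeasurable hf.exp.aestronglyMeasurable]
  rw [Measure.map_apply hT.measurable hs, tilted_apply' _ _ (hT.measurable hs),
    tilted_apply' _ _ hs, hZ]
  exact hT.setLIntegral_comp_preimage hs (hf.exp.div_const _).ennreal_ofReal

lemma integral_comp_of_measurePreserving {T : α → β} (hT : MeasurePreserving T μ ν) {f : β → ℝ}
    (hf : AEStronglyMeasurable f ν) : ∫ a, f (T a) ∂μ = ∫ b, f b ∂ν := by
  rw [← hT.map_eq, integral_map hT.aemeasurable (hT.map_eq ▸ hf)]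

lemma integral_nonneg_of_sum_comp_nonneg {ι : Type*} [Fintype ι] [Nonempty ι] {T : ι → α → α}
    (hT : ∀ i, MeasurePreserving (T i) μ μ) {f : α → ℝ} (hf : Integrable f μ)
    (hsum : ∀ a, 0 ≤ ∑ i, f (T i a)) : 0 ≤ ∫ a, f a ∂μ := by
  have havg : ∫ a, ∑ i, f (T i a) ∂μ = Fintype.card ι * ∫ a, f a ∂μ := by
    have hfT (i : ι) : Integrable (fun a => f (T i a)) μ := (hT i).integrable_comp_of_integrable hf
    rw [integral_finsetSum _ fun i _ => hfT i]
    simp [integral_comp_of_measurePreserving (hT _) hf.aestronglyMeasurable]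
  have hnonneg := havg ▸ integral_nonneg hsum
  exact nonneg_of_mul_nonneg_right hnonneg (Nat.cast_pos.2 Fintype.card_pos)

end Tilted

/-! ### Griffiths' first inequality -/

section Griffiths

lemma exp_mul_units_int (c : ℝ) (u : ℤˣ) : exp (c * u) = cosh c + sinh c * u := by
  rcases Int.units_eq_one_or u with rfl | rfl
  · simp [cosh_add_sinh]
  · simp [← sub_eq_add_neg, cosh_sub_sinh]

lemma sum_signCharacter_nonneg {G : Type*} [Group G] [Fintype G] (χ : G →* ℤˣ) :
    0 ≤ ∑ g, (χ g : ℝ) := by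
  classical
  have h := sum_hom_units ((Units.coeHom ℤ).comp χ)
  have h' : 0 ≤ ∑ g, (χ g : ℤ) := by
    refine h.symm ▸ ?_
    split_ifs <;> simp
  exact_mod_cast h'

/-- Writing `exp (J ψ) = cosh J + sinh J * ψ` removes one interaction at the price of replacing the
character `χ` by `χ * ψ` in one of the two resulting terms. -/
theorem sum_signCharacter_mul_exp_nonneg {G ι : Type*} [Group G] [Fintype G] (s : Finset ι)
    (ψ : ι → G →* ℤˣ) (J : ι → ℝ) (hJ : ∀ k ∈ s, 0 ≤ J k) (χ : G →* ℤˣ) :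
    0 ≤ ∑ g, (χ g : ℝ) * exp (∑ k ∈ s, J k * ψ k g) := by
  classical
  induction s using Finset.induction_on generalizing χ with
  | empty => simpa using sum_signCharacter_nonneg χ
  | insert k s hk ih =>
    have hJs := fun l hl => hJ l (Finset.mem_insert_of_mem hl)
    have hsplit : ∑ g, (χ g : ℝ) * exp (∑ l ∈ insert k s, J l * ψ l g) =
        cosh (J k) * ∑ g, (χ g : ℝ) * exp (∑ l ∈ s, J l * ψ l g) +
          sinh (J k) * ∑ g, ((χ * ψ k) g : ℝ) * exp (∑ l ∈ s, J l * ψ l g) := by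
      rw [Finset.mul_sum, Finset.mul_sum, ← Finset.sum_add_distrib]
      refine Finset.sum_congr rfl fun g _ => ?_
      rw [Finset.sum_insert hk, exp_add, exp_mul_units_int, MonoidHom.mul_apply]
      push_cast
      ring
    have hsinh : 0 ≤ sinh (J k) := sinh_nonneg_iff.2 (hJ k (Finset.mem_insert_self k s))
    rw [hsplit]
    exact add_nonneg (mul_nonneg (cosh_pos _).le (ih hJs χ)) (mul_nonneg hsinh (ih hJs _))

variable {V : Type*} [Fintype V] [DecidableEq V]

lemma sum_sign_mul_eq_sum_sign_mul_abs (F : (V → ℝ) → ℝ) (a : V → ℝ) :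
    ∑ σ : V → ℤˣ, F (fun x => σ x * a x) = ∑ σ : V → ℤˣ, F (fun x => σ x * |a x|) := by
  have hsign (x : V) : ∃ u : ℤˣ, u * a x = |a x| := by
    rcases abs_choice (a x) with h | h
    · exact ⟨1, by simp [h]⟩
    · exact ⟨-1, by simp [h]⟩
  choose ε hε using hsign
  rw [← Equiv.sum_comp (Equiv.mulRight ε)]
  simp [← hε, mul_assoc]

theorem sum_sign_mul_sign_mul_exp_nonneg {J : Matrix V V ℝ} (hJ : ∀ x y, 0 ≤ J x y) (a : V → ℝ)
    (u v : V) :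
    0 ≤ ∑ σ : V → ℤˣ, (σ u * a u) * (σ v * a v) *
      exp (∑ x, ∑ y, J x y * ((σ x * a x) * (σ y * a y))) := by
  rw [sum_sign_mul_eq_sum_sign_mul_abs
    (fun b => b u * b v * exp (∑ x, ∑ y, J x y * (b x * b y)))]
  let pair (x y : V) : (V → ℤˣ) →* ℤˣ :=
    Pi.evalMonoidHom (fun _ => ℤˣ) x * Pi.evalMonoidHom (fun _ => ℤˣ) y
  have hgriffiths := sum_signCharacter_mul_exp_nonneg Finset.univ (fun p : V × V => pair p.1 p.2)
    (fun p => J p.1 p.2 * (|a p.1| * |a p.2|))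
    (fun p _ => mul_nonneg (hJ _ _) (by positivity)) (pair u v)
  have habs : 0 ≤ |a u| * |a v| := by positivity
  refine (mul_nonneg habs hgriffiths).trans_eq ?_
  rw [Finset.mul_sum]
  refine Finset.sum_congr rfl fun σ _ => ?_
  have hexp : ∑ p : V × V, J p.1 p.2 * (|a p.1| * |a p.2|) * pair p.1 p.2 σ =
      ∑ x, ∑ y, J x y * ((σ x * |a x|) * (σ y * |a y|)) := by
    rw [Fintype.sum_prod_type]
    refine Finset.sum_congr rfl fun x _ => Finset.sum_congr rfl fun y _ => ?_
    simp only [pair, MonoidHom.mul_apply, Pi.evalMonoidHom_apply]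
    push_cast
    ring
  rw [hexp]
  simp only [pair, MonoidHom.mul_apply, Pi.evalMonoidHom_apply]
  push_cast
  ring

end Griffiths

/-! ### Positive semidefinite matrices with constant row sums -/

theorem four_mul_rowSum_div_card_le_of_posSemidef {V : Type*} [Fintype V] {K : Matrix V V ℝ}
    (hK : K.PosSemidef) {r : ℝ} (hr : ∀ x, ∑ z, K x z = r) (x y : V) :
    4 * (r / Fintype.card V) ≤ K x x + K y y + 2 * K x y := by
  classical
  have hsymm (u v : V) : K u v = K v u := by simpa using hK.isHermitian.apply v u
  have : Nonempty V := ⟨x⟩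
  have hcard : (Fintype.card V : ℝ) ≠ 0 := Nat.cast_ne_zero.2 Fintype.card_ne_zero
  set k : ℝ := 2 / Fintype.card V with hk
  have hkcard : k * Fintype.card V = 2 := div_mul_cancel₀ _ hcard
  have hrow : K *ᵥ 1 = r • 1 := by ext z; simp [Matrix.mulVec, dotProduct_one, hr]
  have hcol (v : V) : ∑ z, K z v = r := by simp only [hsymm _ v, hr]
  have hquad := hK.dotProduct_mulVec_nonneg (Pi.single x 1 + Pi.single y 1 - k • 1)
  simp only [star_trivial, Matrix.mulVec_sub, Matrix.mulVec_add, Matrix.mulVec_smul, hrow,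
    Matrix.mulVec_single_one, dotProduct_sub, dotProduct_add, sub_dotProduct, add_dotProduct,
    smul_dotProduct, dotProduct_smul, single_one_dotProduct, one_dotProduct, Matrix.col_apply,
    hcol, hsymm y x, Pi.one_apply, Finset.sum_const, Finset.card_univ, nsmul_eq_mul, mul_one,
    smul_eq_mul, mul_left_comm k r, hkcard] at hquad
  have hkr : 4 * (r / Fintype.card V) = 2 * (k * r) := by rw [hk]; ring
  linarith

/-! ### The `O(N)` model on a finite set with pair couplings -/

section SpinModel

variable {V W : Type*} [Fintype V] [Fintype W] {N : ℕ}

/-- The interaction energy `-βH`, with `β` absorbed into the couplings `J`. The sum is over ordered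
pairs, so `{x, y}` is counted twice, once with `J x y` and once with `J y x`. -/
noncomputable def pairInteraction (J : Matrix V V ℝ) (φ : V → SpinSphere N) : ℝ :=
  ∑ x, ∑ y, J x y * ⟪(φ x : EuclideanSpace ℝ (Fin N)), φ y⟫

/-- The Gibbs measure of the `O(N)` model on `V` with couplings `J`, the inverse temperature being
part of `J`. -/
noncomputable def spinGibbs (N : ℕ) (J : Matrix V V ℝ) : Measure (V → SpinSphere N) :=
  (Measure.pi fun _ => sphereUniform N).tilted (pairInteraction J)

/-- The two-point function `⟨φ_x^i φ_y^i⟩` of the `i`-th spin component, as a matrix indexed by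
the sites. -/
noncomputable def spinCorr (J : Matrix V V ℝ) (i : Fin N) : Matrix V V ℝ :=
  Matrix.of fun x y =>
    ∫ φ, (φ x : EuclideanSpace ℝ (Fin N)) i * (φ y : EuclideanSpace ℝ (Fin N)) i ∂spinGibbs N J

lemma continuous_pairInteraction (J : Matrix V V ℝ) :
    Continuous (pairInteraction J : (V → SpinSphere N) → ℝ) := by
  unfold pairInteraction
  fun_prop

lemma pairInteraction_unitSphereMap (J : Matrix V V ℝ)
    (e : EuclideanSpace ℝ (Fin N) ≃ₗᵢ[ℝ] EuclideanSpace ℝ (Fin N)) (φ : V → SpinSphere N) :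
    pairInteraction J (fun x => unitSphereMap e (φ x)) = pairInteraction J φ := by
  simp [pairInteraction]

lemma pairInteraction_comp_equiv (J : Matrix W W ℝ) (e : V ≃ W) (φ : W → SpinSphere N) :
    pairInteraction (J.submatrix e e) (φ ∘ e) = pairInteraction J φ := by
  simp only [pairInteraction, ← e.sum_comp, Matrix.submatrix_apply, Function.comp_apply]

lemma pairInteraction_coordSign (J : Matrix V V ℝ) (i : Fin N) (σ : V → ℤˣ)
    (φ : V → SpinSphere N) :
    pairInteraction J (fun x => unitSphereMap (coordSign i (σ x)) (φ x)) =
      ∑ x, ∑ y, J x y * (⟪(φ x : EuclideanSpace ℝ (Fin N)), φ y⟫ -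
        (φ x : EuclideanSpace ℝ (Fin N)) i * (φ y : EuclideanSpace ℝ (Fin N)) i) +
      ∑ x, ∑ y, J x y * ((σ x * (φ x : EuclideanSpace ℝ (Fin N)) i) *
        (σ y * (φ y : EuclideanSpace ℝ (Fin N)) i)) := by
  simp only [pairInteraction, coe_unitSphereMap, inner_coordSign, mul_add, Finset.sum_add_distrib]

variable [NeZero N]

instance (J : Matrix V V ℝ) : IsProbabilityMeasure (spinGibbs N J) :=
  isProbabilityMeasure_tilted <|
    (continuous_pairInteraction J).rexp.integrable_of_hasCompactSupport (.of_compactSpace _)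

lemma integrable_spinGibbs (J : Matrix V V ℝ) {f : (V → SpinSphere N) → ℝ} (hf : Continuous f) :
    Integrable f (spinGibbs N J) :=
  hf.integrable_of_hasCompactSupport (.of_compactSpace f)

lemma measurePreserving_unitSphereMap_spinGibbs (J : Matrix V V ℝ)
    (e : EuclideanSpace ℝ (Fin N) ≃ₗᵢ[ℝ] EuclideanSpace ℝ (Fin N)) :
    MeasurePreserving (fun φ x => unitSphereMap e (φ x)) (spinGibbs N J) (spinGibbs N J) := by
  have hpi := measurePreserving_pi _ _
    fun _ : V => measurePreserving_unitSphereMap_sphereUniform e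
  have htilted := measurePreserving_tilted hpi (continuous_pairInteraction J).measurable
  have hinv : pairInteraction J ∘ (fun φ x => unitSphereMap e (φ x)) = pairInteraction J :=
    funext (pairInteraction_unitSphereMap J e)
  rwa [hinv] at htilted

lemma measurePreserving_comp_equiv_spinGibbs (J : Matrix W W ℝ) (e : V ≃ W) :
    MeasurePreserving (fun φ : W → SpinSphere N => φ ∘ e) (spinGibbs N J)
      (spinGibbs N (J.submatrix e e)) := by
  have hpi : MeasurePreserving (fun φ : W → SpinSphere N => φ ∘ e) _ _ :=
    (measurePreserving_piCongrLeft (fun _ : W => sphereUniform N) e).symm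
  have htilted := measurePreserving_tilted hpi
    (continuous_pairInteraction (J.submatrix e e)).measurable
  have hinv : pairInteraction (J.submatrix e e) ∘ (fun φ : W → SpinSphere N => φ ∘ e) =
      pairInteraction J :=
    funext (pairInteraction_comp_equiv J e)
  rwa [hinv] at htilted

lemma spinCorr_submatrix (J : Matrix W W ℝ) (e : V ≃ W) (i : Fin N) :
    spinCorr (J.submatrix e e) i = (spinCorr J i).submatrix e e := by
  ext x y
  exact (integral_comp_of_measurePreserving (measurePreserving_comp_equiv_spinGibbs J e)
    (Continuous.aestronglyMeasurable (by fun_prop))).symm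

lemma spinCorr_self_eq_spinCorr_self (J : Matrix V V ℝ) (i j : Fin N) (x : V) :
    spinCorr J i x x = spinCorr J j x x := by
  let e := LinearIsometryEquiv.piLpCongrLeft 2 ℝ ℝ (Equiv.swap i j)
  have hinv := integral_comp_of_measurePreserving (measurePreserving_unitSphereMap_spinGibbs J e)
    (f := fun φ => (φ x : EuclideanSpace ℝ (Fin N)) i * (φ x : EuclideanSpace ℝ (Fin N)) i)
    (Continuous.aestronglyMeasurable (by fun_prop))
  simpa [e, spinCorr] using hinv.symm

lemma spinCorr_self (J : Matrix V V ℝ) (i : Fin N) (x : V) : spinCorr J i x x = 1 / N := by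
  have hnorm (φ : V → SpinSphere N) :
      ∑ j, (φ x : EuclideanSpace ℝ (Fin N)) j * (φ x : EuclideanSpace ℝ (Fin N)) j = 1 := by
    simp [← sq, ← EuclideanSpace.real_norm_sq_eq]
  have hsum : ∑ j : Fin N, spinCorr J j x x = 1 := by
    simp only [spinCorr, Matrix.of_apply]
    rw [← integral_finsetSum _ fun j _ => integrable_spinGibbs J (by fun_prop)]
    simp [hnorm]
  rw [Finset.sum_congr rfl fun j _ => spinCorr_self_eq_spinCorr_self J j i x] at hsum
  rw [eq_div_iff (Nat.cast_ne_zero.2 (NeZero.ne N)), mul_comm]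
  simpa using hsum

lemma dotProduct_spinCorr_mulVec (J : Matrix V V ℝ) (i : Fin N) (c : V → ℝ) :
    c ⬝ᵥ (spinCorr J i *ᵥ c) =
      ∫ φ, (∑ x, c x * (φ x : EuclideanSpace ℝ (Fin N)) i) ^ 2 ∂spinGibbs N J := by
  simp only [sq, Finset.sum_mul_sum]
  rw [integral_finsetSum _ fun x _ => integrable_spinGibbs J (by fun_prop)]
  refine Finset.sum_congr rfl fun x _ => ?_
  rw [integral_finsetSum _ fun y _ => integrable_spinGibbs J (by fun_prop), Matrix.mulVec,
    dotProduct, Finset.mul_sum]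
  refine Finset.sum_congr rfl fun y _ => ?_
  rw [spinCorr, Matrix.of_apply, ← integral_mul_const, ← integral_const_mul]
  congr with φ
  ring

theorem posSemidef_spinCorr (J : Matrix V V ℝ) (i : Fin N) : (spinCorr J i).PosSemidef := by
  refine .of_dotProduct_mulVec_nonneg ?_ fun c => ?_
  · ext x y
    simp [spinCorr, mul_comm]
  · rw [star_trivial, dotProduct_spinCorr_mulVec]
    exact integral_nonneg fun φ => sq_nonneg _

theorem two_mul_mean_sub_le_spinCorr {J : Matrix V V ℝ}
    (hJ : ∀ x y, ∃ e : V ≃ V, e x = y ∧ J.submatrix e e = J) (i : Fin N) (x y : V) :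
    2 * ((∑ z, spinCorr J i x z) / Fintype.card V) - 1 / N ≤ spinCorr J i x y := by
  have hrow (u : V) : ∑ z, spinCorr J i u z = ∑ z, spinCorr J i x z := by
    obtain ⟨e, rfl, he⟩ := hJ x u
    rw [← e.sum_comp]
    simp only [← Matrix.submatrix_apply (spinCorr J i) e e, ← spinCorr_submatrix, he]
  have hbound := four_mul_rowSum_div_card_le_of_posSemidef (posSemidef_spinCorr J i) hrow x y
  rw [spinCorr_self, spinCorr_self] at hbound
  linarith

theorem spinCorr_nonneg {J : Matrix V V ℝ} (hJ : ∀ x y, 0 ≤ J x y) (i : Fin N) (u v : V) :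
    0 ≤ spinCorr J i u v := by
  classical
  rw [spinCorr, Matrix.of_apply, spinGibbs, integral_tilted_eq_inv_mul_integral]
  refine mul_nonneg (inv_nonneg.2 (integral_nonneg fun φ => (exp_pos _).le)) ?_
  have hcont := continuous_pairInteraction (N := N) J
  refine integral_nonneg_of_sum_comp_nonneg
    (T := fun (σ : V → ℤˣ) φ x => unitSphereMap (coordSign i (σ x)) (φ x))
    (fun σ => measurePreserving_pi _ _ fun x => measurePreserving_unitSphereMap_sphereUniform _)
    (Continuous.integrable_of_hasCompactSupport (by fun_prop) (.of_compactSpace _)) fun φ => ?_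
  have hising := sum_sign_mul_sign_mul_exp_nonneg hJ
    (fun x => (φ x : EuclideanSpace ℝ (Fin N)) i) u v
  simp only [coe_unitSphereMap, coordSign_apply_self, pairInteraction_coordSign, exp_add,
    mul_left_comm _ (exp (∑ x, ∑ y, J x y * (_ - _))), ← Finset.mul_sum]
  exact mul_nonneg (exp_pos _).le hising

end SpinModel

/-! ### The nearest-neighbour model on the torus -/

section Torus

variable {d L : ℕ}

lemma torusAdj_add_right (x y a : TorusPt d L) : torusAdj (x + a) (y + a) ↔ torusAdj x y := by
  have hupdate (j : Fin d) (c : ZMod L) :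
      Function.update (x + a) j ((x + a) j + c) = Function.update x j (x j + c) + a := by
    ext k
    obtain rfl | hk := eq_or_ne k j
    · simp [add_right_comm]
    · simp [hk]
  simp only [torusAdj, sub_eq_add_neg, hupdate, add_left_inj]

/-- The nearest-neighbour couplings on the torus at inverse temperature `β`. The value is `β / 2`
because `pairInteraction` sees every edge in both orientations. -/
noncomputable def torusCoupling (d L : ℕ) (β : ℝ) : Matrix (TorusPt d L) (TorusPt d L) ℝ :=
  Matrix.of fun x y => if torusAdj x y then β / 2 else 0

lemma torusCoupling_nonneg {β : ℝ} (hβ : 0 ≤ β) (x y : TorusPt d L) :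
    0 ≤ torusCoupling d L β x y := by
  rw [torusCoupling, Matrix.of_apply]
  positivity

lemma torusCoupling_submatrix_addRight (β : ℝ) (a : TorusPt d L) :
    (torusCoupling d L β).submatrix (Equiv.addRight a) (Equiv.addRight a) =
      torusCoupling d L β := by
  ext x y
  simp [torusCoupling, torusAdj_add_right]

variable [NeZero L] {N : ℕ}

lemma card_torusPt : Fintype.card (TorusPt d L) = L ^ d := by
  simp [ZMod.card]

lemma neg_mul_hamiltonian (β : ℝ) (φ : SpinCfg d L N) :
    -β * hamiltonian φ = pairInteraction (torusCoupling d L β) φ := by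
  simp only [hamiltonian, pairInteraction, torusCoupling, Matrix.of_apply, Finset.mul_sum]
  refine Finset.sum_congr rfl fun x _ => Finset.sum_congr rfl fun y _ => ?_
  split_ifs <;> ring

variable [NeZero N]

lemma corrOne_eq_spinCorr (β : ℝ) (x y : TorusPt d L) :
    corrOne d L N β x y = spinCorr (torusCoupling d L β) (0 : Fin N) x y := by
  rw [spinCorr, Matrix.of_apply, spinGibbs, integral_tilted_eq_inv_mul_integral]
  simp only [corrOne, gibbsExp, neg_mul_hamiltonian, spinMeasure]

lemma corrOne_nonneg {β : ℝ} (hβ : 0 ≤ β) (x y : TorusPt d L) : 0 ≤ corrOne d L N β x y := by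
  rw [corrOne_eq_spinCorr]
  exact spinCorr_nonneg (torusCoupling_nonneg hβ) 0 x y

theorem two_mul_mean_sub_le_corrOne (β : ℝ) (x y : TorusPt d L) :
    2 * (1 / (L : ℝ) ^ d * ∑ z, corrOne d L N β x z) - 1 / N ≤ corrOne d L N β x y := by
  simp only [corrOne_eq_spinCorr]
  have hbound := two_mul_mean_sub_le_spinCorr (J := torusCoupling d L β)
    (fun u v => ⟨Equiv.addRight (v - u), add_sub_cancel u v, torusCoupling_submatrix_addRight β _⟩)
    (0 : Fin N) x y
  rwa [card_torusPt, Nat.cast_pow, div_eq_inv_mul, ← one_div] at hbound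

end Torus

/-! ### The pointwise bound -/

lemma mul_pow_le_max_zero {c : ℝ} (hc0 : 0 ≤ c) (hc1 : c ≤ 1) (a : ℝ) (n : ℕ) :
    a * c ^ n ≤ max a 0 :=
  (mul_le_mul_of_nonneg_right (le_max_left a 0) (pow_nonneg hc0 n)).trans
    (mul_le_of_le_one_right (le_max_right a 0) (pow_le_one₀ hc0 hc1))

lemma mul_exp_neg_mul_le_one {a b : ℝ} (ha : 1 ≤ a) (hb : 0 ≤ b) : b * exp (-a * b) ≤ 1 :=
  calc
    b * exp (-a * b) ≤ b * exp (-b) := by gcongr; nlinarith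
    _ ≤ exp (-1) := mul_exp_neg_le_exp_neg_one b
    _ ≤ 1 := exp_le_one_iff.2 (by norm_num)

theorem spin_mean_lower_bound_implies_pointwise_general
    (d L N : ℕ) [NeZero L] [NeZero N] (β : ℝ) (hβ : 0 ≤ β) (δ : ℝ)
    (hmean : 1 / (N : ℝ) - δ ≤
      (1 / (L : ℝ) ^ d) * ∑ z : TorusPt d L, corrOne d L N β (torusOrigin d L) z)
    (y : TorusPt d L) :
    max (1 / (N : ℝ) - 2 * δ) 0 ≤ corrOne d L N β (torusOrigin d L) y := by
  refine max_le ?_ (corrOne_nonneg hβ _ y)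
  linarith [two_mul_mean_sub_le_corrOne (N := N) β (torusOrigin d L) y]

/-- **From a Cesàro-mean lower bound to point-wise lower bounds in `B_{L/8}`.**
If `δ ∈ (0,1)` and `(1/|T_L|) ∑_{z} ⟨φ_o^1 φ_z^1⟩ ≥ 1/N - δ`, then
`⟨φ_o^1 φ_y^1⟩ ≥ 1/N - 2^{2d} δ` for all `y ∈ B_{L/8} ∩ H_L`, and
`⟨φ_o^1 φ_y^1⟩ ≥ (1/N - 2^{2d} δ)(β e^{-2dβ}/N)^{d-2}` for all `y ∈ B_{L/8} ∖ H_L`. -/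
theorem spin_mean_lower_bound_implies_pointwise
    (d L N : ℕ) [NeZero L] [NeZero N] (hd : 2 ≤ d) (hL : Even L)
    (β : ℝ) (hβ : 0 ≤ β) (δ : ℝ) (hδ0 : 0 < δ) (hδ1 : δ < 1)
    (hmean : 1 / (N : ℝ) - δ ≤
      (1 / (L : ℝ) ^ d) * ∑ z : TorusPt d L, corrOne d L N β (torusOrigin d L) z) :
    (∀ y : TorusPt d L, (tnormInf y : ℝ) ≤ (L : ℝ) / 8 → inHL y →
        1 / (N : ℝ) - 2 ^ (2 * d) * δ ≤ corrOne d L N β (torusOrigin d L) y) ∧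
      (∀ y : TorusPt d L, (tnormInf y : ℝ) ≤ (L : ℝ) / 8 → ¬ inHL y →
        (1 / (N : ℝ) - 2 ^ (2 * d) * δ) * (β * Real.exp (-2 * d * β) / N) ^ (d - 2) ≤
          corrOne d L N β (torusOrigin d L) y) := by
  have hpow : (2 : ℝ) ≤ 2 ^ (2 * d) := le_self_pow₀ one_le_two (by lia)
  have hbound (y : TorusPt d L) :
      max (1 / (N : ℝ) - 2 ^ (2 * d) * δ) 0 ≤ corrOne d L N β (torusOrigin d L) y :=
    (max_le_max_right 0 (by gcongr)).trans
      (spin_mean_lower_bound_implies_pointwise_general d L N β hβ δ hmean y)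
  have htwo : 1 ≤ 2 * (d : ℝ) := mod_cast (by lia : 1 ≤ 2 * d)
  have hexp : β * exp (-2 * d * β) ≤ 1 := by
    simpa only [neg_mul] using mul_exp_neg_mul_le_one htwo hβ
  have hfactor : β * exp (-2 * d * β) / N ≤ 1 :=
    div_le_one_of_le₀ (hexp.trans (Nat.one_le_cast.2 NeZero.one_le)) N.cast_nonneg
  exact ⟨fun y _ _ => (le_max_left _ _).trans (hbound y),
    fun y _ _ => (mul_pow_le_max_zero (by positivity) hfactor _ _).trans (hbound y)⟩
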